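/- arXiv:1708.05932 — 2 statements merged into one kernel-verified Lean document; each statement's English description precedes it below -/
import Mathlib

section
/- Decay of the second-moment integral below the information-theoretic threshold: Let f : [0,1] → (0,∞) be continuous with f(0) = 1, define F_δ(m) = δ·log f(m) + log(1−m) for δ > 0 and m ∈ (0,1), and let δ_ℓ = sup{δ > 0 : F_δ(m) < 0 for all m ∈ (0,1]} (with the convention log(1−m) = −∞ at m = 1). Let (n_k) and (d_k) be sequences of natural numbers tending to infinity with n_k/d_k → δ for some δ ∈ (0, δ_ℓ). Then lim_{k→∞} (d_k − 1)/n_k · ∫₀¹ f(m)^{n_k} (1 − m)^{d_k − 2} dm = 0. -/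
/-!
If `F_D ≤ 0` on `(0,1)`, then `f(m) ≤ (1 - m)^(-1/D)` there, so the integrand is at most
`(1 - m)^(d - 2 - n/D)` and its integral at most `1/(d - 1 - n/D)`. Choosing `δ < D`, the factor
`(d - 1)/(d - 1 - n/D)` converges to `(1 - δ/D)⁻¹`, and the remaining `1/n` gives the decay.
-/

noncomputable section
open MeasureTheory Filter Topology

/-- The exponent `F_δ(m) = δ log f(m) + log (1-m)`. -/
def Fdelta (f : ℝ → ℝ) (δ m : ℝ) : ℝ :=
  δ * Real.log (f m) + Real.log (1 - m)

/-- The information-theoretic threshold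
`δ_ℓ = sup {δ > 0 : F_δ(m) < 0 for all m ∈ (0,1)}` (the endpoint `m = 1` is
excluded since there `log(1-m) = -∞` by convention, so the condition holds
automatically). -/
def deltaEll (f : ℝ → ℝ) : ℝ :=
  sSup {δ : ℝ | 0 < δ ∧ ∀ m ∈ Set.Ioo (0 : ℝ) 1, Fdelta f δ m < 0}

section Threshold

variable {f : ℝ → ℝ} {D m : ℝ}

lemma exists_Fdelta_neg_of_lt_deltaEll {δ : ℝ} (hδ_nonneg : 0 ≤ δ) (hδ : δ < deltaEll f) :
    ∃ D, 0 < D ∧ δ < D ∧ ∀ m ∈ Set.Ioo (0 : ℝ) 1, Fdelta f D m < 0 := by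
  have hne : {δ : ℝ | 0 < δ ∧ ∀ m ∈ Set.Ioo (0 : ℝ) 1, Fdelta f δ m < 0}.Nonempty := by
    rw [Set.nonempty_iff_ne_empty]
    intro hempty
    rw [deltaEll, hempty, Real.sSup_empty] at hδ
    exact hδ.not_ge hδ_nonneg
  obtain ⟨D, ⟨hD, hF⟩, hδD⟩ := exists_lt_of_lt_csSup hne hδ
  exact ⟨D, hD, hδD, hF⟩

lemma le_one_sub_rpow_of_Fdelta_nonpos (hD : 0 < D) (hm : m < 1) (hF : Fdelta f D m ≤ 0) :
    f m ≤ (1 - m) ^ (-D⁻¹) := by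
  have hlog : Real.log (f m) ≤ Real.log (1 - m) * -D⁻¹ := by
    rw [mul_neg, ← div_eq_mul_inv, ← neg_div, le_div_iff₀ hD]
    unfold Fdelta at hF
    linarith
  calc f m ≤ Real.exp (Real.log (f m)) := Real.le_exp_log _
    _ ≤ Real.exp (Real.log (1 - m) * -D⁻¹) := Real.exp_le_exp.2 hlog
    _ = (1 - m) ^ (-D⁻¹) := (Real.rpow_def_of_pos (sub_pos.2 hm) _).symm

lemma pow_mul_one_sub_pow_nonneg (hm : m ≤ 1) (hf : 0 ≤ f m) (n p : ℕ) :
    0 ≤ f m ^ n * (1 - m) ^ p :=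
  mul_nonneg (pow_nonneg hf n) (pow_nonneg (sub_nonneg.2 hm) p)

lemma pow_mul_one_sub_pow_le_rpow (hD : 0 < D) (hm : m < 1) (hf : 0 ≤ f m)
    (hF : Fdelta f D m ≤ 0) (n p : ℕ) :
    f m ^ n * (1 - m) ^ p ≤ (1 - m) ^ (p - n / D : ℝ) := by
  have h1m : 0 < 1 - m := sub_pos.2 hm
  calc f m ^ n * (1 - m) ^ p
      ≤ ((1 - m) ^ (-D⁻¹)) ^ n * (1 - m) ^ p := by
        gcongr
        exact le_one_sub_rpow_of_Fdelta_nonpos hD hm hF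
    _ = (1 - m) ^ (-D⁻¹ * n + p) := by
        rw [Real.rpow_add h1m, Real.rpow_mul h1m.le, Real.rpow_natCast, Real.rpow_natCast]
    _ = (1 - m) ^ (p - n / D : ℝ) := by
        congr 1
        ring

end Threshold

section Integral

lemma integrableOn_one_sub_rpow {s : ℝ} (hs : -1 < s) :
    IntegrableOn (fun m : ℝ => (1 - m) ^ s) (Set.Ioo 0 1) := by
  have h : IntervalIntegrable (fun x : ℝ => x ^ s) volume 1 0 :=
    intervalIntegral.intervalIntegrable_rpow' hs
  rw [← intervalIntegrable_iff_integrableOn_Ioo_of_le zero_le_one]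
  simpa using h.comp_sub_left 1

lemma integral_one_sub_rpow {s : ℝ} (hs : -1 < s) :
    ∫ m in Set.Ioo (0 : ℝ) 1, (1 - m) ^ s = 1 / (s + 1) := by
  have hs' : s + 1 ≠ 0 := by linarith
  rw [← integral_Ioc_eq_integral_Ioo, ← intervalIntegral.integral_of_le zero_le_one,
    intervalIntegral.integral_comp_sub_left (fun x : ℝ => x ^ s) 1, integral_rpow (.inl hs)]
  simp [Real.zero_rpow hs']

variable {f : ℝ → ℝ} {D : ℝ} {n p : ℕ}

lemma integrableOn_pow_mul_one_sub_pow
    (hf_meas : AEStronglyMeasurable f (volume.restrict (Set.Ioo 0 1)))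
    (hf : ∀ m ∈ Set.Ioo (0 : ℝ) 1, 0 ≤ f m) (hD : 0 < D)
    (hF : ∀ m ∈ Set.Ioo (0 : ℝ) 1, Fdelta f D m ≤ 0) (hs : (-1 : ℝ) < p - n / D) :
    IntegrableOn (fun m => f m ^ n * (1 - m) ^ p) (Set.Icc 0 1) := by
  rw [integrableOn_Icc_iff_integrableOn_Ioo]
  refine (integrableOn_one_sub_rpow hs).mono' ((hf_meas.pow n).mul (by fun_prop)) ?_
  filter_upwards [ae_restrict_mem measurableSet_Ioo] with m hm
  rw [Real.norm_of_nonneg (pow_mul_one_sub_pow_nonneg hm.2.le (hf m hm) n p)]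
  exact pow_mul_one_sub_pow_le_rpow hD hm.2 (hf m hm) (hF m hm) n p

lemma setIntegral_pow_mul_one_sub_pow_nonneg (hf : ∀ m ∈ Set.Ioo (0 : ℝ) 1, 0 ≤ f m) :
    0 ≤ ∫ m in Set.Ioo (0 : ℝ) 1, f m ^ n * (1 - m) ^ p :=
  setIntegral_nonneg measurableSet_Ioo fun m hm =>
    pow_mul_one_sub_pow_nonneg hm.2.le (hf m hm) n p

lemma setIntegral_pow_mul_one_sub_pow_le (hf : ∀ m ∈ Set.Ioo (0 : ℝ) 1, 0 ≤ f m) (hD : 0 < D)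
    (hF : ∀ m ∈ Set.Ioo (0 : ℝ) 1, Fdelta f D m ≤ 0) (hs : (-1 : ℝ) < p - n / D) :
    ∫ m in Set.Ioo (0 : ℝ) 1, f m ^ n * (1 - m) ^ p ≤ 1 / (p - n / D + 1) := by
  rw [← integral_one_sub_rpow hs]
  refine integral_mono_of_nonneg ?_ (integrableOn_one_sub_rpow hs) ?_
  all_goals filter_upwards [ae_restrict_mem measurableSet_Ioo] with m hm
  · exact pow_mul_one_sub_pow_nonneg hm.2.le (hf m hm) n p
  · exact pow_mul_one_sub_pow_le_rpow hD hm.2 (hf m hm) (hF m hm) n p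

end Integral

section Limit

variable {ι : Type*} {l : Filter ι} {x y : ι → ℝ} {δ D : ℝ}

lemma tendsto_sub_one_sub_div_div (hy : Tendsto y l atTop)
    (hratio : Tendsto (fun k => x k / y k) l (𝓝 δ)) (D : ℝ) :
    Tendsto (fun k => (y k - 1 - x k / D) / y k) l (𝓝 (1 - δ / D)) := by
  have hlim : Tendsto (fun k => 1 - (y k)⁻¹ - x k / y k / D) l (𝓝 (1 - 0 - δ / D)) :=
    (tendsto_const_nhds.sub (tendsto_inv_atTop_zero.comp hy)).sub (hratio.div_const D)
  rw [sub_zero] at hlim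
  refine hlim.congr' ?_
  filter_upwards [hy.eventually_ne_atTop 0] with k hk
  field_simp

lemma eventually_sub_one_sub_div_pos (hy : Tendsto y l atTop)
    (hratio : Tendsto (fun k => x k / y k) l (𝓝 δ)) (hδD : δ / D < 1) :
    ∀ᶠ k in l, 0 < y k - 1 - x k / D := by
  filter_upwards [hy.eventually_gt_atTop 0,
    (tendsto_sub_one_sub_div_div hy hratio D).eventually_const_lt (sub_pos.2 hδD)] with k hyk hk
  exact (div_pos_iff_of_pos_right hyk).1 hk

lemma tendsto_sub_one_div_mul_one_div_zero (hx : Tendsto x l atTop) (hy : Tendsto y l atTop)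
    (hratio : Tendsto (fun k => x k / y k) l (𝓝 δ)) (hδD : δ / D ≠ 1) :
    Tendsto (fun k => (y k - 1) / x k * (1 / (y k - 1 - x k / D))) l (𝓝 0) := by
  have hlim : Tendsto (fun k => (1 - (y k)⁻¹) * (x k)⁻¹ * ((y k - 1 - x k / D) / y k)⁻¹) l
      (𝓝 ((1 - 0) * 0 * (1 - δ / D)⁻¹)) :=
    ((tendsto_const_nhds.sub (tendsto_inv_atTop_zero.comp hy)).mul
      (tendsto_inv_atTop_zero.comp hx)).mul
      ((tendsto_sub_one_sub_div_div hy hratio D).inv₀ (sub_ne_zero.2 hδD.symm))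
  rw [mul_zero, zero_mul] at hlim
  refine hlim.congr' ?_
  filter_upwards [hy.eventually_ne_atTop 0] with k hk
  rw [inv_div, one_div]
  field_simp

end Limit

/-- A single `D > δ` with `F_D ≤ 0` replaces `δ < deltaEll f`, because the real `sSup` defining
`deltaEll` takes the value `0` when the set of admissible exponents is unbounded. -/
theorem second_moment_integral_decay_general {ι : Type*} {l : Filter ι} {f : ℝ → ℝ}
    (hf_meas : AEStronglyMeasurable f (volume.restrict (Set.Ioo 0 1)))
    (hf : ∀ m ∈ Set.Ioo (0 : ℝ) 1, 0 ≤ f m)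
    {n d : ι → ℕ} (hn : Tendsto n l atTop) (hd : Tendsto d l atTop)
    {δ D : ℝ} (hD : 0 < D) (hF : ∀ m ∈ Set.Ioo (0 : ℝ) 1, Fdelta f D m ≤ 0) (hδ : δ < D)
    (hratio : Tendsto (fun k => (n k : ℝ) / (d k : ℝ)) l (𝓝 δ)) :
    (∀ᶠ k in l, IntegrableOn (fun m => f m ^ n k * (1 - m) ^ (d k - 2)) (Set.Icc 0 1)) ∧
    Tendsto (fun k =>
        ((d k : ℝ) - 1) / (n k : ℝ) *
          ∫ m in Set.Icc (0 : ℝ) 1, f m ^ (n k) * (1 - m) ^ (d k - 2))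
      l (𝓝 0) := by
  simp only [integral_Icc_eq_integral_Ioo]
  have hnR : Tendsto (fun k => (n k : ℝ)) l atTop := tendsto_natCast_atTop_atTop.comp hn
  have hdR : Tendsto (fun k => (d k : ℝ)) l atTop := tendsto_natCast_atTop_atTop.comp hd
  have hδD : δ / D < 1 := (div_lt_one hD).2 hδ
  have hd2 : ∀ᶠ k in l, 2 ≤ d k := hd.eventually_ge_atTop 2
  have hexp : ∀ᶠ k in l, (-1 : ℝ) < (d k - 2 : ℕ) - n k / D := by
    filter_upwards [eventually_sub_one_sub_div_pos hdR hratio hδD, hd2] with k hk hdk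
    push_cast [hdk]
    linarith
  have hprefactor : ∀ᶠ k in l, 0 ≤ ((d k : ℝ) - 1) / n k := by
    filter_upwards [hdR.eventually_ge_atTop 1] with k hk
    exact div_nonneg (sub_nonneg.2 hk) (Nat.cast_nonneg _)
  refine ⟨hexp.mono fun k => integrableOn_pow_mul_one_sub_pow hf_meas hf hD hF,
    squeeze_zero' ?_ ?_ (tendsto_sub_one_div_mul_one_div_zero hnR hdR hratio hδD.ne)⟩
  · filter_upwards [hprefactor] with k hk
    exact mul_nonneg hk (setIntegral_pow_mul_one_sub_pow_nonneg hf)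
  · filter_upwards [hprefactor, hexp, hd2] with k hk hexpk hdk
    have hcast : ((d k - 2 : ℕ) : ℝ) - n k / D + 1 = d k - 1 - n k / D := by
      push_cast [hdk]
      ring
    rw [← hcast]
    exact mul_le_mul_of_nonneg_left (setIntegral_pow_mul_one_sub_pow_le hf hD hF hexpk) hk

/-- **Decay of the second-moment integral below the information-theoretic
threshold.** If `f : [0,1] → (0,∞)` is continuous with `f 0 = 1` and
`n_k/d_k → δ < δ_ℓ`, then `(d_k-1)/n_k ∫₀¹ f(m)^{n_k} (1-m)^{d_k-2} dm → 0`. -/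
theorem second_moment_integral_decay
    (f : ℝ → ℝ) (hf_cont : ContinuousOn f (Set.Icc 0 1))
    (hf_pos : ∀ m ∈ Set.Icc (0 : ℝ) 1, 0 < f m) (hf0 : f 0 = 1)
    (n d : ℕ → ℕ) (hn : Tendsto n atTop atTop) (hd : Tendsto d atTop atTop)
    (δ : ℝ) (hδ_pos : 0 < δ) (hδ : δ < deltaEll f)
    (hratio : Tendsto (fun k => (n k : ℝ) / (d k : ℝ)) atTop (𝓝 δ)) :
    Tendsto (fun k =>
        ((d k : ℝ) - 1) / (n k : ℝ) *
          ∫ m in Set.Icc (0 : ℝ) 1, f m ^ (n k) * (1 - m) ^ (d k - 2))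
      atTop (𝓝 0) := by
  obtain ⟨D, hD, hδD, hF⟩ := exists_Fdelta_neg_of_lt_deltaEll hδ_pos.le hδ
  exact (second_moment_integral_decay_general
    ((hf_cont.mono Set.Ioo_subset_Icc_self).aestronglyMeasurable measurableSet_Ioo)
    (fun m hm => (hf_pos m (Set.Ioo_subset_Icc_self hm)).le) hn hd hD (fun m hm => (hF m hm).le)
    hδD hratio).2
end
end

section
/- Finiteness of the information-theoretic threshold for non-degenerate real sensing models: Let p(y|g) be a conditional density on ℝ × ℝ, let G ~ N(0,1), and define f : [−1,1] → ℝ by f(m) = ∫_ℝ E[p(y|G₁) p(y|G₂)] / E[p(y|G)] dy, where G₁, W are i.i.d. N(0,1) and G₂ = m·G₁ + √(1−m²)·W; set F_δ(m) = δ·log f(m) + (1/2)·log(1−m²) and δ_ℓ = sup{δ > 0 : F_δ(m) < 0 for all m ∈ [−1,1] \ {0}}. Then f(1) = 1 + ∫_ℝ Var_G(p(y|G)) / E_G[p(y|G)] dy; consequently, if ∫_ℝ Var_G(p(y|G)) / E_G[p(y|G)] dy > 0 (i.e., p(y|·) is not almost surely constant in G on a set of y of positive measure), then there exists m* ∈ (0,1)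 with f(m*) > 1 and δ_ℓ ≤ −log(1 − m*²)/(2·log f(m*)) + 1 < ∞. -/
noncomputable section
open MeasureTheory ProbabilityTheory Filter Topology

/-- `E_G[p(y | G)]` for `G ~ N(0,1)`. -/
def EpR (p : ℝ → ℝ → ℝ) (y : ℝ) : ℝ :=
  ∫ g, p y g ∂(gaussianReal 0 1)

/-- `Var_G(p(y|G)) = E[p(y|G)²] - (E[p(y|G)])²` for `G ~ N(0,1)`. -/
def VarG (p : ℝ → ℝ → ℝ) (y : ℝ) : ℝ :=
  (∫ g, p y g ^ 2 ∂(gaussianReal 0 1)) - (EpR p y) ^ 2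

/-- The second-moment function
`f(m) = ∫ E[p(y|G₁) p(y|G₂)] / E[p(y|G)] dy`, where `G, G₁, W` are i.i.d.
`N(0,1)` and `G₂ = m G₁ + √(1-m²) W`. -/
def fR (p : ℝ → ℝ → ℝ) (m : ℝ) : ℝ :=
  ∫ y, (∫ g, p y g.1 * p y (m * g.1 + Real.sqrt (1 - m ^ 2) * g.2)
        ∂((gaussianReal 0 1).prod (gaussianReal 0 1))) / EpR p y

/-- `F_δ(m) = δ log f(m) + (1/2) log (1-m²)`. -/
def FdeltaR (p : ℝ → ℝ → ℝ) (δ m : ℝ) : ℝ :=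
  δ * Real.log (fR p m) + (1 / 2) * Real.log (1 - m ^ 2)

/-- The set of `δ > 0` at which weak recovery is information-theoretically
impossible (at the endpoints `m = ±1` one has `log(1-m²) = -∞`, so the
condition holds automatically there; we thus quantify over `m ∈ (-1,1)`,
`m ≠ 0`). -/
def lowerSet (p : ℝ → ℝ → ℝ) : Set ℝ :=
  {δ : ℝ | 0 < δ ∧ ∀ m ∈ Set.Ioo (-1 : ℝ) 1, m ≠ 0 → FdeltaR p δ m < 0}

/-- The information-theoretic threshold `δ_ℓ`. -/
def deltaEllR (p : ℝ → ℝ → ℝ) : ℝ :=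
  sSup (lowerSet p)

/-! On the diagonal `m = 1` the two Gaussians coincide, so the integrand of `f(1)` is
`E[p²] / E[p] = E[p] + Var(p) / E[p]`, and `∫ E[p(y|G)] dy = 1` by Tonelli. If the variance integral
is positive then `f(1) > 1`, and left continuity moves this inequality to some `m < 1`, where
`log (1 - m²)` is finite. At that single point `F_δ(m) < 0` already caps `δ`. -/

section ConditionalDensity

variable {Y Γ : Type*} [MeasurableSpace Y] [MeasurableSpace Γ]
  {ν : Measure Y} [SFinite ν] {μ : Measure Γ} [IsProbabilityMeasure μ] {p : Y → Γ → ℝ}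

lemma integrable_uncurry_of_integral_eq_one
    (hp_meas : AEStronglyMeasurable (Function.uncurry p) (ν.prod μ))
    (hp_nonneg : ∀ y g, 0 ≤ p y g) (hp_dens : ∀ᵐ g ∂μ, ∫ y, p y g ∂ν = 1) :
    Integrable (Function.uncurry p) (ν.prod μ) := by
  have h_section : ∀ᵐ g ∂μ, Integrable (fun y => p y g) ν := by
    filter_upwards [hp_dens] with g hg
    exact .of_integral_ne_zero (hg ▸ one_ne_zero)
  have h_norm : (fun _ => 1) =ᵐ[μ] fun g => ∫ y, ‖p y g‖ ∂ν := by
    filter_upwards [hp_dens] with g hg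
    simp only [Real.norm_of_nonneg (hp_nonneg _ _), hg]
  exact (integrable_prod_iff' hp_meas).2 ⟨h_section, (integrable_const 1).congr h_norm⟩

lemma integral_integral_eq_one (hp : Integrable (Function.uncurry p) (ν.prod μ))
    (hp_dens : ∀ᵐ g ∂μ, ∫ y, p y g ∂ν = 1) :
    ∫ y, ∫ g, p y g ∂μ ∂ν = 1 := by
  rw [integral_integral_swap hp, integral_congr_ae hp_dens, integral_const, probReal_univ,
    one_smul]

/-- If the mean vanishes, both sides are `0` by the convention `x / 0 = 0`. -/
lemma integral_sq_div_integral_eq_add {X : Γ → ℝ} (hX : MemLp X 2 μ) :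
    (∫ g, X g ^ 2 ∂μ) / ∫ g, X g ∂μ = (∫ g, X g ∂μ) + Var[X; μ] / ∫ g, X g ∂μ := by
  have h_sq : ∫ g, X g ^ 2 ∂μ = (∫ g, X g ∂μ) * (∫ g, X g ∂μ) + Var[X; μ] := by
    rw [variance_eq_sub hX]
    simp only [Pi.pow_apply]
    ring
  rw [h_sq, add_div, mul_self_div_self]

lemma integral_integral_sq_div_integral (hp : Integrable (Function.uncurry p) (ν.prod μ))
    (hp_dens : ∀ᵐ g ∂μ, ∫ y, p y g ∂ν = 1) (hp_sq : ∀ᵐ y ∂ν, MemLp (p y) 2 μ)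
    (hp_var : Integrable (fun y => Var[p y; μ] / ∫ g, p y g ∂μ) ν) :
    ∫ y, (∫ g, p y g ^ 2 ∂μ) / ∫ g, p y g ∂μ ∂ν
      = 1 + ∫ y, Var[p y; μ] / ∫ g, p y g ∂μ ∂ν := by
  have h_mean : Integrable (fun y => ∫ g, p y g ∂μ) ν := hp.integral_prod_left
  rw [integral_congr_ae (hp_sq.mono fun _ => integral_sq_div_integral_eq_add),
    integral_add h_mean hp_var, integral_integral_eq_one hp hp_dens]

end ConditionalDensity

lemma exists_mem_Ioo_lt_of_continuousWithinAt {α β : Type*}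
    [LinearOrder α] [DenselyOrdered α] [TopologicalSpace α] [OrderTopology α]
    [LinearOrder β] [TopologicalSpace β] [OrderTopology β]
    {f : α → β} {a b : α} {c : β} (hab : a < b) (hf : ContinuousWithinAt f (Set.Iio b) b)
    (hc : c < f b) : ∃ x ∈ Set.Ioo a b, c < f x := by
  have := nhdsLT_neBot_of_exists_lt ⟨a, hab⟩
  have h_Ioo : ∀ᶠ x in 𝓝[<] b, x ∈ Set.Ioo a b := Ioo_mem_nhdsLT hab
  exact (h_Ioo.and (hf.eventually (lt_mem_nhds hc))).exists

section Threshold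

variable {p : ℝ → ℝ → ℝ} {m : ℝ}

lemma VarG_eq_variance {y : ℝ} (hp : MemLp (p y) 2 (gaussianReal 0 1)) :
    VarG p y = Var[p y; gaussianReal 0 1] :=
  (variance_eq_sub hp).symm

lemma fR_one_eq_integral_sq_div (p : ℝ → ℝ → ℝ) :
    fR p 1 = ∫ y, (∫ g, p y g ^ 2 ∂(gaussianReal 0 1)) / EpR p y := by
  have h_fst (y : ℝ) : ∫ g, p y g.1 ^ 2 ∂((gaussianReal 0 1).prod (gaussianReal 0 1))
      = ∫ g, p y g ^ 2 ∂(gaussianReal 0 1) := by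
    rw [integral_fun_fst (fun g => p y g ^ 2), probReal_univ, one_smul]
  simp [fR, ← sq, h_fst]

lemma fR_one_eq_one_add_integral_variance (hp_meas : Measurable (Function.uncurry p))
    (hp_nonneg : ∀ y g, 0 ≤ p y g) (hp_dens : ∀ᵐ g ∂(gaussianReal 0 1), ∫ y, p y g = 1)
    (hp_sq : ∀ᵐ y, Integrable (fun g => p y g ^ 2) (gaussianReal 0 1))
    (hp_var : Integrable fun y => VarG p y / EpR p y) :
    fR p 1 = 1 + ∫ y, VarG p y / EpR p y := by
  have hp := integrable_uncurry_of_integral_eq_one hp_meas.aestronglyMeasurable hp_nonneg hp_dens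
  have h_memLp : ∀ᵐ y, MemLp (p y) 2 (gaussianReal 0 1) := hp_sq.mono fun y hy =>
    (memLp_two_iff_integrable_sq hp_meas.of_uncurry_left.aestronglyMeasurable).2 hy
  have h_var : (fun y => VarG p y / EpR p y) =ᵐ[volume]
      fun y => Var[p y; gaussianReal 0 1] / ∫ g, p y g ∂(gaussianReal 0 1) :=
    h_memLp.mono fun y hy => congrArg (· / EpR p y) (VarG_eq_variance hy)
  rw [fR_one_eq_integral_sq_div, integral_congr_ae h_var]
  exact integral_integral_sq_div_integral hp hp_dens h_memLp (hp_var.congr h_var)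

lemma lt_of_mem_lowerSet {δ : ℝ} (hm : m ∈ Set.Ioo (-1) 1) (hm0 : m ≠ 0) (hf : 1 < fR p m)
    (hδ : δ ∈ lowerSet p) :
    δ < -Real.log (1 - m ^ 2) / (2 * Real.log (fR p m)) := by
  have h_log : 0 < Real.log (fR p m) := Real.log_pos hf
  have h_neg : δ * Real.log (fR p m) + 1 / 2 * Real.log (1 - m ^ 2) < 0 := hδ.2 m hm hm0
  rw [lt_div_iff₀ (by positivity)]
  linarith

lemma bddAbove_lowerSet (hm : m ∈ Set.Ioo (-1) 1) (hm0 : m ≠ 0) (hf : 1 < fR p m) :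
    BddAbove (lowerSet p) :=
  ⟨_, fun _ hδ => (lt_of_mem_lowerSet hm hm0 hf hδ).le⟩

lemma deltaEllR_le (hm : m ∈ Set.Ioo (-1) 1) (hm0 : m ≠ 0) (hf : 1 < fR p m) :
    deltaEllR p ≤ -Real.log (1 - m ^ 2) / (2 * Real.log (fR p m)) := by
  -- `lowerSet p` may be empty, and then its supremum is `0`.
  have h_nonneg : 0 ≤ -Real.log (1 - m ^ 2) / (2 * Real.log (fR p m)) := by
    have h_log : 0 < Real.log (fR p m) := Real.log_pos hf
    have h_sq : m ^ 2 < 1 := (sq_lt_one_iff_abs_lt_one m).2 (abs_lt.2 hm)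
    have h_log_le : Real.log (1 - m ^ 2) ≤ 0 :=
      Real.log_nonpos (sub_nonneg.2 h_sq.le) (sub_le_self 1 (sq_nonneg m))
    exact div_nonneg (neg_nonneg.2 h_log_le) (by positivity)
  exact Real.sSup_le (fun _ hδ => (lt_of_mem_lowerSet hm hm0 hf hδ).le) h_nonneg

end Threshold

theorem deltaEll_finite_real_general
    (p : ℝ → ℝ → ℝ) (hp_meas : Measurable (Function.uncurry p))
    (hp_nonneg : ∀ y g, 0 ≤ p y g)
    (hp_dens : ∀ᵐ g ∂(gaussianReal 0 1), ∫ y, p y g = 1)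
    (hp_sq : ∀ᵐ y, Integrable (fun g => p y g ^ 2) (gaussianReal 0 1))
    (hp_var : Integrable (fun y => VarG p y / EpR p y))
    (hf_cont : ContinuousWithinAt (fR p) (Set.Iio 1) 1) :
    (fR p 1 = 1 + ∫ y, VarG p y / EpR p y) ∧
    (0 < ∫ y, VarG p y / EpR p y →
      ∃ ms ∈ Set.Ioo (0 : ℝ) 1, 1 < fR p ms ∧
        BddAbove (lowerSet p) ∧
        deltaEllR p ≤ -Real.log (1 - ms ^ 2) / (2 * Real.log (fR p ms))) := by
  have h_one := fR_one_eq_one_add_integral_variance hp_meas hp_nonneg hp_dens hp_sq hp_var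
  refine ⟨h_one, fun h_pos => ?_⟩
  have h_gt : 1 < fR p 1 := h_one ▸ lt_add_of_pos_right 1 h_pos
  obtain ⟨ms, hms, hf⟩ := exists_mem_Ioo_lt_of_continuousWithinAt one_pos hf_cont h_gt
  have hms' : ms ∈ Set.Ioo (-1) 1 := ⟨neg_one_lt_zero.trans hms.1, hms.2⟩
  exact ⟨ms, hms, hf, bddAbove_lowerSet hms' hms.1.ne' hf, deltaEllR_le hms' hms.1.ne' hf⟩

/-- **Finiteness of the information-theoretic threshold for non-degenerate
real sensing models.**  One has
`f(1) = 1 + ∫ Var_G(p(y|G))/E_G[p(y|G)] dy`; consequently, if this variance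
integral is strictly positive, there is `m* ∈ (0,1)` with `f(m*) > 1` and
`δ_ℓ ≤ -log(1-m*²)/(2 log f(m*)) + 1 < ∞`. -/
theorem deltaEll_finite_real
    (p : ℝ → ℝ → ℝ) (hp_meas : Measurable (Function.uncurry p))
    (hp_nonneg : ∀ y g, 0 ≤ p y g)
    (hp_dens : ∀ g, ∫ y, p y g = 1)
    -- the relevant integrals are assumed finite, and `f` continuous on `[0,1]`
    (h_int0 : ∀ y, Integrable (fun g => p y g ^ 2) (gaussianReal 0 1))
    (h_int1 : Integrable (fun y => EpR p y))
    (h_int2 : Integrable (fun y => VarG p y / EpR p y))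
    (hf_cont : ContinuousOn (fR p) (Set.Icc 0 1)) :
    (fR p 1 = 1 + ∫ y, VarG p y / EpR p y) ∧
    (0 < ∫ y, VarG p y / EpR p y →
      ∃ ms ∈ Set.Ioo (0 : ℝ) 1, 1 < fR p ms ∧
        BddAbove (lowerSet p) ∧
        deltaEllR p ≤ -Real.log (1 - ms ^ 2) / (2 * Real.log (fR p ms)) + 1) := by
  obtain ⟨h_one, h_bound⟩ := deltaEll_finite_real_general p hp_meas hp_nonneg (.of_forall hp_dens)
    (.of_forall h_int0) h_int2
    ((hf_cont 1 (by simp)).mono_of_mem_nhdsWithin (Icc_mem_nhdsLT one_pos))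
  refine ⟨h_one, fun h_pos => ?_⟩
  obtain ⟨ms, hms, hf, h_bdd, h_le⟩ := h_bound h_pos
  exact ⟨ms, hms, hf, h_bdd, h_le.trans (le_add_of_nonneg_right zero_le_one)⟩
end
end
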